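/- Let φ : X → (−∞, ∞] be proper, convex, σ(X, X*)-lower semicontinuous, and law invariant. Then the following are equivalent: (i) φ is an affine function of the expectation, i.e. there exist a, b ∈ ℝ with φ(X) = a E[X] + b for all X ∈ X; (ii) there exist a ∈ ℝ and a nonconstant Z ∈ X with E[Z] ≠ 0 such that φ(X + tZ) = φ(X) + a t for all X ∈ X and t ∈ ℝ; (iii) there exist a ∈ ℝ, a nonconstant Z ∈ X with E[Z] ≠ 0, and a constant x ∈ dom(φ) ∩ ℝ such that φ(x + tZ) = φ(x) + a t for all t ∈ ℝ; (iv) the set dom(φ*) = {Y ∈ X* : φ*(Y) ∈ ℝ} consists of exactly one element, and this element is P-a.s. constant. -/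

import Mathlib

/-!
The hypotheses (ii) and (iii) both say that `φ` is affine with slope `a` along some line `X + tZ`
through a point `X` of its domain. The proof shows that this weak property already forces (iv),
that (iv) forces (i), and that (i) gives (ii) and (iii) with `Z` an indicator.

From a line to (iv) (`dom_conj_of_line`). If `Y ∈ dom φ*`, then
`E[(X + tZ)Y] - φ(X + tZ)` is affine in `t` and bounded above, so `E[ZY] = a`. By law invariance
the same holds with `(X, Z)` replaced by any pair with the same joint law. If `Y` were not
constant, one could choose two such pairs: the part of `Z` above its mean is placed on `{Y > y}`
and an equally large part below its mean on `{Y < y}` in the first, and the two are exchanged in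
the second (`exists_rearrangements`). The two expectations then differ, a contradiction. So `Y`
is a constant, and `E[Z] ≠ 0` identifies it as `a / E[Z]`. That `dom φ*` is nonempty is part of
the Fenchel–Moreau argument.

The pairs exist because an atomless measure realises every law on a standard Borel space
(`exists_map_eq`). This follows by a quantile transform from an increasing family of sets
attaining all measures, obtained as a maximal chain (`exists_chain`).

From (iv) to (i) (`affine_of_dom_conj`). A point strictly below the graph of `φ` is separated from
the epigraph (`exists_separation`). A non-vertical separating hyperplane is an element of
`dom φ*`, hence the constant `c`; a vertical one could be added to `c` inside `dom φ*`, which (iv)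
excludes. Hence `φ(X) = c E[X] - φ*(c)`.
-/

open MeasureTheory Set List
open scoped ENNReal NNReal

noncomputable section

namespace Collapse

variable {Ω : Type*} [MeasurableSpace Ω]

/-- A measure is atomless (nonatomic) if every set of positive measure contains a
measurable subset of strictly smaller positive measure. -/
def IsAtomless (P : Measure Ω) : Prop :=
  ∀ A : Set Ω, MeasurableSet A → 0 < P A →
    ∃ B : Set Ω, MeasurableSet B ∧ B ⊆ A ∧ 0 < P B ∧ P B < P A

/-- `X` and `Y` have the same law under `P`. -/
def SameLaw (P : Measure Ω) (X Y : Ω → ℝ) : Prop :=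
  Measure.map X P = Measure.map Y P

/-- `X` is not `P`-a.s. equal to a constant. -/
def Nonconstant (P : Measure Ω) (X : Ω → ℝ) : Prop :=
  ∀ c : ℝ, ¬ X =ᵐ[P] (fun _ => c)

/-- `X` and `Y` are comonotone:
`P(X ≤ x, Y ≤ y) = min (P(X ≤ x)) (P(Y ≤ y))` for all `x y`. -/
def Comonotone (P : Measure Ω) (X Y : Ω → ℝ) : Prop :=
  ∀ x y : ℝ,
    P ({ω | X ω ≤ x} ∩ {ω | Y ω ≤ y}) = min (P {ω | X ω ≤ x}) (P {ω | Y ω ≤ y})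

/-- `X` and `Y` are antimonotone:
`P(X ≤ x, Y ≤ y) = max (P(X ≤ x) + P(Y ≤ y) - 1) 0` for all `x y`
(in `ℝ≥0∞`, truncated subtraction realises the `max` with `0`). -/
def Antimonotone (P : Measure Ω) (X Y : Ω → ℝ) : Prop :=
  ∀ x y : ℝ,
    P ({ω | X ω ≤ x} ∩ {ω | Y ω ≤ y}) = (P {ω | X ω ≤ x} + P {ω | Y ω ≤ y}) - 1

/-- `q` is a quantile function of `X` under `P`. -/
def IsQuantile (P : Measure Ω) (X : Ω → ℝ) (q : ℝ → ℝ) : Prop :=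
  ∀ s ∈ Set.Ioo (0:ℝ) 1,
    sInf {x : ℝ | s ≤ (P {ω | X ω ≤ x}).toReal} ≤ q s ∧
    q s ≤ sInf {x : ℝ | s < (P {ω | X ω ≤ x}).toReal}

/-- `X` belongs to `L^∞(P)`: measurable and essentially bounded. -/
def MemLinf (P : Measure Ω) (X : Ω → ℝ) : Prop :=
  Measurable X ∧ ∃ M : ℝ, ∀ᵐ ω ∂P, |X ω| ≤ M

/-- A pair `(𝒳, 𝒳*)` of law-invariant vector subspaces of `L¹(P)` containing `L^∞(P)`
such that `X * Y ∈ L¹(P)` for all `X ∈ 𝒳`, `Y ∈ 𝒳*` (Assumption 2.1). -/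
structure PairedSpaces (P : Measure Ω) where
  carrier : Set (Ω → ℝ)
  dual : Set (Ω → ℝ)
  meas_carrier : ∀ X ∈ carrier, Measurable X
  meas_dual : ∀ Y ∈ dual, Measurable Y
  int_carrier : ∀ X ∈ carrier, Integrable X P
  int_dual : ∀ Y ∈ dual, Integrable Y P
  smul_carrier : ∀ X ∈ carrier, ∀ c : ℝ, (fun ω => c * X ω) ∈ carrier
  add_carrier : ∀ X ∈ carrier, ∀ X' ∈ carrier, (fun ω => X ω + X' ω) ∈ carrier
  smul_dual : ∀ Y ∈ dual, ∀ c : ℝ, (fun ω => c * Y ω) ∈ dual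
  add_dual : ∀ Y ∈ dual, ∀ Y' ∈ dual, (fun ω => Y ω + Y' ω) ∈ dual
  linf_carrier : ∀ X : Ω → ℝ, MemLinf P X → X ∈ carrier
  linf_dual : ∀ Y : Ω → ℝ, MemLinf P Y → Y ∈ dual
  lawinv_carrier : ∀ X ∈ carrier, ∀ X' : Ω → ℝ, Measurable X' → SameLaw P X' X → X' ∈ carrier
  lawinv_dual : ∀ Y ∈ dual, ∀ Y' : Ω → ℝ, Measurable Y' → SameLaw P Y' Y → Y' ∈ dual
  mul_int : ∀ X ∈ carrier, ∀ Y ∈ dual, Integrable (fun ω => X ω * Y ω) P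

/-- A subset `C` of `𝒳` is closed in the weak topology `σ(𝒳, 𝒳*)`, i.e. the topology
on `𝒳` induced by the linear functionals `X ↦ E[X Y]`, `Y ∈ 𝒳*`. -/
def WeakClosed (P : Measure Ω) (pr : PairedSpaces P) (C : Set (Ω → ℝ)) : Prop :=
  @IsClosed ↥pr.carrier
    (TopologicalSpace.induced
      (fun X : ↥pr.carrier => (fun Y : ↥pr.dual => ∫ ω, (X : Ω → ℝ) ω * (Y : Ω → ℝ) ω ∂P))
      Pi.topologicalSpace)
    {X : ↥pr.carrier | (X : Ω → ℝ) ∈ C}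

/-- `φ` is `σ(𝒳, 𝒳*)`-lower semicontinuous: every sublevel set is `σ(𝒳, 𝒳*)`-closed. -/
def WeakLSC (P : Measure Ω) (pr : PairedSpaces P) (φ : (Ω → ℝ) → EReal) : Prop :=
  ∀ m : ℝ, WeakClosed P pr {X | X ∈ pr.carrier ∧ φ X ≤ (m : EReal)}

/-- The (upper) support functional `σ_C(Y) = sup_{X ∈ C} E[XY]`. -/
def suppFn (P : Measure Ω) (C : Set (Ω → ℝ)) (Y : Ω → ℝ) : EReal :=
  ⨆ X ∈ C, ((∫ ω, X ω * Y ω ∂P : ℝ) : EReal)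

/-- The conjugate functional `φ*(Y) = sup_{X ∈ 𝒳} (E[XY] - φ(X))`. -/
def conj (P : Measure Ω) (𝒳 : Set (Ω → ℝ)) (φ : (Ω → ℝ) → EReal) (Y : Ω → ℝ) : EReal :=
  ⨆ X ∈ 𝒳, (((∫ ω, X ω * Y ω ∂P : ℝ) : EReal) - φ X)

/-- The recession cone `C^∞ = {X ∈ 𝒳 : {X} + C ⊆ C}`. -/
def recCone (𝒳 C : Set (Ω → ℝ)) : Set (Ω → ℝ) :=
  {X | X ∈ 𝒳 ∧ ∀ U ∈ C, (fun ω => X ω + U ω) ∈ C}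

/-- A functional on `𝒳` is law invariant. -/
def LawInvariantFn (P : Measure Ω) (𝒳 : Set (Ω → ℝ)) (φ : (Ω → ℝ) → EReal) : Prop :=
  ∀ X ∈ 𝒳, ∀ Y ∈ 𝒳, SameLaw P X Y → φ X = φ Y

/-- A set of random variables is law invariant. -/
def LawInvariantSet (P : Measure Ω) (C : Set (Ω → ℝ)) : Prop :=
  ∀ X ∈ C, ∀ Y : Ω → ℝ, Measurable Y → SameLaw P Y X → Y ∈ C

/-- A functional on `𝒳` is expectation invariant. -/
def ExpectationInvariantFn (P : Measure Ω) (𝒳 : Set (Ω → ℝ)) (φ : (Ω → ℝ) → EReal) : Prop :=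
  ∀ X ∈ 𝒳, ∀ Y ∈ 𝒳, (∫ ω, X ω ∂P) = (∫ ω, Y ω ∂P) → φ X = φ Y

/-- Convexity of a functional `φ : 𝒳 → (-∞, ∞]`. -/
def ConvexFn (𝒳 : Set (Ω → ℝ)) (φ : (Ω → ℝ) → EReal) : Prop :=
  ∀ X ∈ 𝒳, ∀ Y ∈ 𝒳, ∀ l : ℝ, l ∈ Set.Icc (0:ℝ) 1 →
    φ (fun ω => l * X ω + (1 - l) * Y ω) ≤ (l : EReal) * φ X + ((1 - l : ℝ) : EReal) * φ Y

/-- Quasiconvexity of a functional `φ : 𝒳 → (-∞, ∞]`. -/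
def QuasiconvexFn (𝒳 : Set (Ω → ℝ)) (φ : (Ω → ℝ) → EReal) : Prop :=
  ∀ X ∈ 𝒳, ∀ Y ∈ 𝒳, ∀ l : ℝ, l ∈ Set.Icc (0:ℝ) 1 →
    φ (fun ω => l * X ω + (1 - l) * Y ω) ≤ max (φ X) (φ Y)

/-- Convexity of a set of random variables. -/
def ConvexSet (C : Set (Ω → ℝ)) : Prop :=
  ∀ X ∈ C, ∀ Y ∈ C, ∀ l : ℝ, l ∈ Set.Icc (0:ℝ) 1 →
    (fun ω => l * X ω + (1 - l) * Y ω) ∈ C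

/-- The expectation of `Z` as an extended real number,
`E[Z] = ∫ Z⁺ dP - ∫ Z⁻ dP` computed in `EReal`. -/
def eExp (P : Measure Ω) (Z : Ω → ℝ) : EReal :=
  ((∫⁻ ω, ENNReal.ofReal (Z ω) ∂P : ℝ≥0∞) : EReal) -
    ((∫⁻ ω, ENNReal.ofReal (-(Z ω)) ∂P : ℝ≥0∞) : EReal)

/-- `X` dominates `Y` in the increasing convex (second-order stochastic dominance) sense:
`E[f(X)] ≥ E[f(Y)]` for every nondecreasing convex `f : ℝ → ℝ`. -/
def SSDdom (P : Measure Ω) (X Y : Ω → ℝ) : Prop :=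
  ∀ f : ℝ → ℝ, Monotone f → ConvexOn ℝ Set.univ f →
    eExp P (fun ω => f (Y ω)) ≤ eExp P (fun ω => f (X ω))

/-- A consistent risk measure on `𝒳`: a proper, cash-additive, normalised functional
that is consistent with second-order stochastic dominance. -/
def IsConsistentRM (P : Measure Ω) (𝒳 : Set (Ω → ℝ)) (φ : (Ω → ℝ) → EReal) : Prop :=
  (∀ X ∈ 𝒳, φ X ≠ (⊥ : EReal)) ∧
  (∃ X ∈ 𝒳, φ X ≠ (⊤ : EReal)) ∧
  (∀ X ∈ 𝒳, ∀ m : ℝ, φ (fun ω => X ω + m) = φ X + (m : EReal)) ∧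
  (∀ X ∈ 𝒳, ∀ Y ∈ 𝒳, SSDdom P X Y → φ Y ≤ φ X) ∧
  φ (fun _ => (0:ℝ)) = (0 : EReal)

/-- A capacity on `(Ω, F)`. -/
structure Capacity (Ω : Type*) [MeasurableSpace Ω] where
  toFun : Set Ω → ℝ
  empty' : toFun ∅ = 0
  univ' : toFun Set.univ = 1
  mono' : ∀ ⦃A B : Set Ω⦄, MeasurableSet A → MeasurableSet B → A ⊆ B → toFun A ≤ toFun B
  nonneg' : ∀ A : Set Ω, MeasurableSet A → 0 ≤ toFun A
  le_one' : ∀ A : Set Ω, MeasurableSet A → toFun A ≤ 1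

/-- A capacity is coherent if it is the upper envelope of a family of probability measures. -/
def Capacity.Coherent (ν : Capacity Ω) : Prop :=
  ∃ Q : Set (Measure Ω), Q.Nonempty ∧ (∀ m ∈ Q, IsProbabilityMeasure m) ∧
    ∀ A : Set Ω, MeasurableSet A → ν.toFun A = ⨆ m ∈ Q, (m A).toReal

/-- A capacity is law invariant (with respect to `P`). -/
def Capacity.LawInvariant (P : Measure Ω) (μ : Capacity Ω) : Prop :=
  ∀ A B : Set Ω, MeasurableSet A → MeasurableSet B → P A = P B → μ.toFun A = μ.toFun B

/-- `μ` is the Jaffray-Philippe capacity represented by the pair `(ν, α)`: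
`μ = α ν + (1 - α) ν̄` with `ν` coherent and `α ∈ [0,1]`,
where `ν̄(A) = 1 - ν(Aᶜ)` is the dual capacity. -/
def IsJPRep (μ ν : Capacity Ω) (α : ℝ) : Prop :=
  ν.Coherent ∧ α ∈ Set.Icc (0:ℝ) 1 ∧
    ∀ A : Set Ω, MeasurableSet A → μ.toFun A = α * ν.toFun A + (1 - α) * (1 - ν.toFun Aᶜ)

/-- The Choquet integral `E_μ[X] = ∫_{-∞}^0 (μ(X > s) - 1) ds + ∫_0^∞ μ(X > s) ds`. -/
def choquet (μ : Capacity Ω) (X : Ω → ℝ) : ℝ :=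
  (∫ s in Set.Iio (0:ℝ), (μ.toFun {ω | s < X ω} - 1)) +
    ∫ s in Set.Ici (0:ℝ), μ.toFun {ω | s < X ω}

/-- `X` is an optimal solution of: maximise `φ` over `C` subject to `E[D X] = p`. -/
def IsOptimal (P : Measure Ω) (φ : (Ω → ℝ) → EReal) (C : Set (Ω → ℝ)) (D : Ω → ℝ)
    (p : ℝ) (X : Ω → ℝ) : Prop :=
  X ∈ C ∧ (∫ ω, D ω * X ω ∂P) = p ∧
    ∀ X' ∈ C, (∫ ω, D ω * X' ω ∂P) = p → φ X' ≤ φ X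

/-- A set of random variables is increasing. -/
def IncreasingSet (C : Set (Ω → ℝ)) : Prop :=
  ∀ X ∈ C, ∀ m : ℝ, 0 ≤ m → (fun ω => X ω + m) ∈ C

/-- `φ` is weakly increasing: `φ(X + m) ≥ φ(X)` for `m ≥ 0`. -/
def WeaklyIncreasingFn (𝒳 : Set (Ω → ℝ)) (φ : (Ω → ℝ) → EReal) : Prop :=
  ∀ X ∈ 𝒳, ∀ m : ℝ, 0 ≤ m → φ X ≤ φ (fun ω => X ω + m)

/-- `φ` is increasing: `φ(X + m) > φ(X)` whenever `φ(X) ∈ ℝ` and `m > 0`. -/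
def IncreasingFn (𝒳 : Set (Ω → ℝ)) (φ : (Ω → ℝ) → EReal) : Prop :=
  ∀ X ∈ 𝒳, (φ X ≠ (⊤ : EReal) ∧ φ X ≠ (⊥ : EReal)) → ∀ m : ℝ, 0 < m →
    φ X < φ (fun ω => X ω + m)


/-! ### Atomless measures realise every law -/

/-- In an atomless finite measure space there is an increasing family of measurable sets
attaining every possible measure. Such a family is a maximal chain for the relation
`A ⊆ B ∧ ν A < ν B`; the strict inequality leaves at most one set for each measure, so that null
sets cause no trouble. -/
lemma exists_chain (ν : Measure Ω) [IsFiniteMeasure ν] (hν : IsAtomless ν) :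
    ∃ E : ℝ≥0∞ → Set Ω, (∀ t ≤ ν univ, MeasurableSet (E t) ∧ ν (E t) = t) ∧
      ∀ s t, s ≤ t → t ≤ ν univ → E s ⊆ E t := by
  classical
  let R : {s : Set Ω // MeasurableSet s} → {s : Set Ω // MeasurableSet s} → Prop :=
    fun A B => A.1 ⊆ B.1 ∧ ν A.1 < ν B.1
  obtain ⟨C, hC, -⟩ := (IsChain.empty (r := R)).exists_maxChain
  have hins : ∀ S, (∀ E ∈ C, E ≠ S → R E S ∨ R S E) → S ∈ C := by
    intro S hS
    have h1 : IsChain R (insert S C) :=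
      hC.1.insert fun b hb hne => (hS b hb hne.symm).symm
    rw [hC.2 h1 (subset_insert _ _)]
    exact mem_insert _ _
  have hlt : ∀ E ∈ C, ∀ F ∈ C, ν E.1 < ν F.1 → E.1 ⊆ F.1 := by
    intro E hE F hF h
    have hne : E ≠ F := by rintro rfl; exact lt_irrefl _ h
    rcases hC.1 hE hF hne with h' | h'
    · exact h'.1
    · exact absurd h (not_lt.2 h'.2.le)
  have hle : ∀ E ∈ C, ∀ F ∈ C, ν E.1 ≤ ν F.1 → E.1 ⊆ F.1 := by
    intro E hE F hF h
    by_cases hne : E = F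
    · rw [hne]
    rcases hC.1 hE hF hne with h' | h'
    · exact h'.1
    · exact absurd h (not_le.2 h'.2)
  have key : ∀ t ≤ ν univ, ∃ E ∈ C, ν E.1 = t := by
    intro t ht
    by_contra hno
    push Not at hno
    have hdich : ∀ E ∈ C, ν E.1 < t ∨ t < ν E.1 := fun E hE => lt_or_gt_of_ne (hno E hE)
    -- a largest element below `t`
    have hM : ∃ M ∈ C, ν M.1 < t ∧ ∀ E ∈ C, ν E.1 < t → ν E.1 ≤ ν M.1 := by
      by_contra hmax
      push Not at hmax
      have hne : {r | ∃ E ∈ C, ν E.1 < t ∧ ν E.1 = r}.Nonempty := by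
        by_contra hemp
        have hU : ∀ E ∈ C, t < ν E.1 := fun E hE =>
          (hdich E hE).resolve_left fun h => hemp ⟨_, E, hE, h, rfl⟩
        have h0 : (⟨∅, MeasurableSet.empty⟩ : {s : Set Ω // MeasurableSet s}) ∈ C :=
          hins _ fun E hE _ => Or.inr ⟨empty_subset _, by
            simpa using lt_of_le_of_lt (zero_le (a := t)) (hU E hE)⟩
        have := hU _ h0
        simp at this
      obtain ⟨u, hu, hut, huS⟩ := exists_seq_tendsto_sSup hne (OrderTop.bddAbove _)
      choose E hEC hEt hEu using huS
      have hmono : Monotone fun n => (E n).1 := fun m n hmn =>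
        hle _ (hEC m) _ (hEC n) (by rw [hEu, hEu]; exact hu hmn)
      let S : {s : Set Ω // MeasurableSet s} := ⟨⋃ n, (E n).1, .iUnion fun n => (E n).2⟩
      have hSle : ν S.1 ≤ t := by
        change ν (⋃ n, (E n).1) ≤ t
        rw [hmono.measure_iUnion]
        exact iSup_le fun n => (hEt n).le
      have hbelow : ∀ F ∈ C, ν F.1 < t → ∃ n, ν F.1 < ν (E n).1 := by
        intro F hF hFt
        obtain ⟨G, hG, hGt, hFG⟩ := hmax F hF hFt
        have : ν F.1 < sSup {r | ∃ E ∈ C, ν E.1 < t ∧ ν E.1 = r} :=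
          hFG.trans_le (le_sSup ⟨G, hG, hGt, rfl⟩)
        obtain ⟨n, hn⟩ := (hut.eventually (lt_mem_nhds this)).exists
        exact ⟨n, by rw [hEu]; exact hn⟩
      have hES : ∀ n, (E n).1 ⊆ S.1 := fun n => subset_iUnion (fun n => (E n).1) n
      have hSC : S ∈ C := by
        refine hins S fun F hF _ => ?_
        rcases hdich F hF with h | h
        · obtain ⟨n, hn⟩ := hbelow F hF h
          exact Or.inl ⟨(hlt F hF _ (hEC n) hn).trans (hES n), hn.trans_le (measure_mono (hES n))⟩
        · exact Or.inr ⟨iUnion_subset fun n => hlt _ (hEC n) F hF ((hEt n).trans h),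
            hSle.trans_lt h⟩
      obtain ⟨n, hn⟩ := hbelow S hSC (lt_of_le_of_ne hSle (hno S hSC))
      exact absurd hn (not_lt.2 (measure_mono (hES n)))
    -- a smallest element above `t`
    have hN : ∃ N ∈ C, t < ν N.1 ∧ ∀ E ∈ C, t < ν E.1 → ν N.1 ≤ ν E.1 := by
      by_contra hmin
      push Not at hmin
      have hne : {r | ∃ E ∈ C, t < ν E.1 ∧ ν E.1 = r}.Nonempty := by
        by_contra hemp
        have hU : ∀ E ∈ C, ν E.1 < t := fun E hE =>
          (hdich E hE).resolve_right fun h => hemp ⟨_, E, hE, h, rfl⟩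
        have h0 : (⟨univ, MeasurableSet.univ⟩ : {s : Set Ω // MeasurableSet s}) ∈ C :=
          hins _ fun E hE _ => Or.inl ⟨subset_univ _, (hU E hE).trans_le ht⟩
        exact absurd (hU _ h0) (not_lt.2 ht)
      obtain ⟨u, hu, hut, huS⟩ := exists_seq_tendsto_sInf hne (OrderBot.bddBelow _)
      choose E hEC hEt hEu using huS
      have hanti : Antitone fun n => (E n).1 := fun m n hmn =>
        hle _ (hEC n) _ (hEC m) (by rw [hEu, hEu]; exact hu hmn)
      let S : {s : Set Ω // MeasurableSet s} := ⟨⋂ n, (E n).1, .iInter fun n => (E n).2⟩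
      have hSle : t ≤ ν S.1 := by
        change t ≤ ν (⋂ n, (E n).1)
        rw [hanti.measure_iInter (fun n => (E n).2.nullMeasurableSet) ⟨0, measure_ne_top _ _⟩]
        exact le_iInf fun n => (hEt n).le
      have hbelow : ∀ F ∈ C, t < ν F.1 → ∃ n, ν (E n).1 < ν F.1 := by
        intro F hF hFt
        obtain ⟨G, hG, hGt, hFG⟩ := hmin F hF hFt
        have : sInf {r | ∃ E ∈ C, t < ν E.1 ∧ ν E.1 = r} < ν F.1 :=
          lt_of_le_of_lt (sInf_le ⟨G, hG, hGt, rfl⟩) hFG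
        obtain ⟨n, hn⟩ := (hut.eventually (gt_mem_nhds this)).exists
        exact ⟨n, by rw [hEu]; exact hn⟩
      have hES : ∀ n, S.1 ⊆ (E n).1 := fun n => iInter_subset (fun n => (E n).1) n
      have hSC : S ∈ C := by
        refine hins S fun F hF _ => ?_
        rcases hdich F hF with h | h
        · exact Or.inl ⟨subset_iInter fun n => hlt F hF _ (hEC n) (h.trans (hEt n)),
            h.trans_le hSle⟩
        · obtain ⟨n, hn⟩ := hbelow F hF h
          exact Or.inr ⟨(hES n).trans (hlt _ (hEC n) F hF hn), (measure_mono (hES n)).trans_lt hn⟩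
      obtain ⟨n, hn⟩ := hbelow S hSC (lt_of_le_of_ne hSle (hno S hSC).symm)
      exact absurd hn (not_lt.2 (measure_mono (hES n)))
    obtain ⟨M, hMC, hMt, hMmax⟩ := hM
    obtain ⟨N, hNC, hNt, hNmin⟩ := hN
    have hMN : M.1 ⊆ N.1 := hlt M hMC N hNC (hMt.trans hNt)
    have hadd : ν (N.1 \ M.1) + ν M.1 = ν N.1 := by
      rw [← measure_union disjoint_sdiff_left M.2, sdiff_union_of_subset hMN]
    have hpos : 0 < ν (N.1 \ M.1) := by
      rw [pos_iff_ne_zero]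
      intro h
      rw [h, zero_add] at hadd
      exact absurd (hMt.trans hNt) (by rw [hadd]; exact lt_irrefl _)
    -- atomlessness places a set strictly between the two neighbours of `t`
    obtain ⟨B, hB, hBsub, hB0, hB1⟩ := hν _ (N.2.diff M.2) hpos
    let S : {s : Set Ω // MeasurableSet s} := ⟨B ∪ M.1, hB.union M.2⟩
    have hSeq : ν S.1 = ν B + ν M.1 :=
      measure_union (disjoint_sdiff_left.mono_left hBsub) M.2
    have hSM : ν M.1 < ν S.1 := by
      rw [hSeq, add_comm]
      exact ENNReal.lt_add_right (measure_ne_top _ _) hB0.ne'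
    have hSN : ν S.1 < ν N.1 := by
      rw [hSeq, ← hadd]
      exact ENNReal.add_lt_add_right (measure_ne_top _ _) hB1
    have hSC : S ∈ C := by
      refine hins S fun F hF _ => ?_
      rcases hdich F hF with h | h
      · have h1 := hMmax F hF h
        exact Or.inl ⟨(hle F hF M hMC h1).trans subset_union_right, h1.trans_lt hSM⟩
      · have h1 := hNmin F hF h
        exact Or.inr ⟨(union_subset (hBsub.trans sdiff_subset) hMN).trans (hle N hNC F hF h1),
          hSN.trans_le h1⟩
    rcases hdich S hSC with h | h
    · exact absurd (hMmax S hSC h) (not_le.2 hSM)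
    · exact absurd (hNmin S hSC h) (not_le.2 hSN)
  choose! E hEC hEt using key
  refine ⟨fun t => (E t).1, fun t ht => ⟨(E t).2, hEt t ht⟩, fun s t hst ht => ?_⟩
  exact hle _ (hEC s (hst.trans ht)) _ (hEC t ht) (by rwa [hEt s (hst.trans ht), hEt t ht])

lemma IsAtomless.restrict {P : Measure Ω} (hP : IsAtomless P) {A : Set Ω}
    (hA : MeasurableSet A) : IsAtomless (P.restrict A) := by
  intro S hS hpos
  rw [Measure.restrict_apply hS] at hpos
  obtain ⟨B, hB, hBs, h0, h1⟩ := hP _ (hS.inter hA) hpos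
  have hBA : B ∩ A = B := inter_eq_left.2 (hBs.trans inter_subset_right)
  refine ⟨B, hB, hBs.trans inter_subset_left, ?_, ?_⟩
  · rwa [Measure.restrict_apply hB, hBA]
  · rwa [Measure.restrict_apply hB, hBA, Measure.restrict_apply hS]

lemma exists_subset_measure_eq {P : Measure Ω} [IsFiniteMeasure P] (hP : IsAtomless P)
    {A : Set Ω} (hA : MeasurableSet A) {p : ℝ≥0∞} (hp : p ≤ P A) :
    ∃ B ⊆ A, MeasurableSet B ∧ P B = p := by
  obtain ⟨E, hE, -⟩ := exists_chain _ (hP.restrict hA)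
  obtain ⟨h1, h2⟩ := hE p (by simpa using hp)
  exact ⟨E p ∩ A, inter_subset_right, h1.inter hA, by rwa [Measure.restrict_apply h1] at h2⟩

/-- The quantile transform relative to the increasing family of `exists_chain`. The transform is
taken with values in `EReal`, where the infimum needs no boundedness. -/
lemma exists_map_eq_real (ν : Measure Ω) [IsFiniteMeasure ν] (hν : IsAtomless ν)
    (μ : Measure ℝ) [IsFiniteMeasure μ] (hμ : μ univ = ν univ) :
    ∃ f : Ω → ℝ, Measurable f ∧ ν.map f = μ := by
  classical
  obtain ⟨E, hE, hEm⟩ := exists_chain ν hν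
  have hb : ∀ q : ℚ, μ (Iic (q : ℝ)) ≤ ν univ := fun q => hμ ▸ measure_mono (subset_univ _)
  let G : ℚ → Set Ω := fun q => E (μ (Iic (q : ℝ)))
  have hGmeas : ∀ q, MeasurableSet (G q) := fun q => (hE _ (hb q)).1
  have hGν : ∀ q, ν (G q) = μ (Iic (q : ℝ)) := fun q => (hE _ (hb q)).2
  have hGmono : Monotone G := fun p q hpq =>
    hEm _ _ (measure_mono (Iic_subset_Iic.2 (by exact_mod_cast hpq))) (hb q)
  let f : Ω → EReal := fun ω => ⨅ q : ℚ, if ω ∈ G q then ((q : ℝ) : EReal) else ⊤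
  have hf : Measurable f :=
    .iInf fun q => Measurable.ite (hGmeas q) measurable_const measurable_const
  have hpre : ∀ x : EReal, f ⁻¹' Iio x = ⋃ q : {q : ℚ // ((q : ℝ) : EReal) < x}, G q.1 := by
    intro x
    ext ω
    simp only [mem_preimage, mem_Iio, f, iInf_lt_iff, mem_iUnion]
    constructor
    · rintro ⟨q, hq⟩
      split_ifs at hq with h
      · exact ⟨⟨q, hq⟩, h⟩
      · exact absurd hq not_top_lt
    · rintro ⟨⟨q, hq⟩, h⟩
      exact ⟨q, by rwa [if_pos h]⟩
  have hpre' : ∀ x : EReal, ((↑) : ℝ → EReal) ⁻¹' Iio x =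
      ⋃ q : {q : ℚ // ((q : ℝ) : EReal) < x}, Iic ((q.1 : ℝ)) := by
    intro x
    ext y
    simp only [mem_preimage, mem_Iio, mem_iUnion, mem_Iic]
    constructor
    · intro h
      obtain ⟨q, h1, h2⟩ := EReal.lt_iff_exists_rat_btwn.1 h
      exact ⟨⟨q, h2⟩, by exact_mod_cast h1.le⟩
    · rintro ⟨⟨q, hq⟩, h⟩
      exact lt_of_le_of_lt (by exact_mod_cast h) hq
  have hmap : ν.map f = μ.map ((↑) : ℝ → EReal) := by
    have : IsFiniteMeasure (ν.map f) := Measure.isFiniteMeasure_map ν f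
    refine ext_of_generate_finite (range Iio) (borel_eq_generateFrom_Iio EReal ▸
      BorelSpace.measurable_eq) isPiSystem_Iio ?_ ?_
    · rintro _ ⟨x, rfl⟩
      rw [Measure.map_apply hf measurableSet_Iio,
        Measure.map_apply measurable_coe_real_ereal measurableSet_Iio, hpre, hpre']
      have d1 : Directed (· ⊆ ·) fun q : {q : ℚ // ((q : ℝ) : EReal) < x} => G q.1 :=
        Monotone.directed_le fun a b hab => hGmono hab
      have d2 : Directed (· ⊆ ·)
          fun q : {q : ℚ // ((q : ℝ) : EReal) < x} => Iic ((q.1 : ℝ)) :=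
        Monotone.directed_le fun a b hab => Iic_subset_Iic.2 (by exact_mod_cast hab)
      rw [d1.measure_iUnion, d2.measure_iUnion]
      simp only [hGν]
    · rw [Measure.map_apply hf .univ, Measure.map_apply measurable_coe_real_ereal .univ]
      simpa using hμ.symm
  refine ⟨fun ω => (f ω).toReal, hf.ereal_toReal, ?_⟩
  have := congrArg (Measure.map EReal.toReal) hmap
  rw [Measure.map_map measurable_ereal_toReal hf,
    Measure.map_map measurable_ereal_toReal measurable_coe_real_ereal] at this
  simpa [Function.comp_def] using this

/-- An atomless measure realises every law of the right mass on a standard Borel space. -/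
lemma exists_map_eq {β : Type*} [MeasurableSpace β] [StandardBorelSpace β] [Nonempty β]
    (ν : Measure Ω) [IsFiniteMeasure ν] (hν : IsAtomless ν)
    (μ : Measure β) [IsFiniteMeasure μ] (hμ : μ univ = ν univ) :
    ∃ f : Ω → β, Measurable f ∧ ν.map f = μ := by
  have he := measurableEmbedding_embeddingReal β
  obtain ⟨g, hg, hge⟩ := he.exists_measurable_extend (g := (id : β → β)) measurable_id
    fun _ => inferInstance
  obtain ⟨f, hf, hfμ⟩ := exists_map_eq_real ν hν (μ.map (embeddingReal β))
    (by rw [Measure.map_apply he.measurable .univ]; simpa using hμ)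
  refine ⟨g ∘ f, hg.comp hf, ?_⟩
  rw [← Measure.map_map hg hf, hfμ, Measure.map_map hg he.measurable, hge, Measure.map_id]

/-! ### Rearranging a random vector against a given variable -/

/-- Gluing maps whose laws on three pieces of `Ω` agree with those of `W` on three other pieces
gives a map with the law of `W`. -/
lemma map_glue {β : Type*} [MeasurableSpace β] (P : Measure Ω) {A B A' B' : Set Ω}
    (hA : MeasurableSet A) (hB : MeasurableSet B) (hA' : MeasurableSet A')
    (hB' : MeasurableSet B') (hAB : Disjoint A B) (hAB' : Disjoint A' B')
    {W W₁ f g h : Ω → β} (hW : Measurable W) (hW₁ : Measurable W₁)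
    (eA : ∀ ω ∈ A, W₁ ω = f ω) (eB : ∀ ω ∈ B, W₁ ω = g ω)
    (eC : ∀ ω ∈ (A ∪ B)ᶜ, W₁ ω = h ω)
    (lA : (P.restrict A).map f = (P.restrict A').map W)
    (lB : (P.restrict B).map g = (P.restrict B').map W)
    (lC : (P.restrict (A ∪ B)ᶜ).map h = (P.restrict (A' ∪ B')ᶜ).map W) :
    P.map W₁ = P.map W := by
  have split : ∀ {D F : Set Ω}, MeasurableSet D → MeasurableSet F → Disjoint D F →
      P = P.restrict D + P.restrict F + P.restrict (D ∪ F)ᶜ := by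
    intro D F hD hF hDF
    rw [← Measure.restrict_union hDF hF, Measure.restrict_add_restrict_compl (hD.union hF)]
  have congr_on : ∀ {D : Set Ω} {k : Ω → β}, MeasurableSet D → (∀ ω ∈ D, W₁ ω = k ω) →
      (P.restrict D).map W₁ = (P.restrict D).map k := by
    intro D k hD hk
    refine Measure.map_congr ?_
    filter_upwards [ae_restrict_mem hD] with ω hω using hk ω hω
  have e1 : P.map W₁ = (P.restrict A).map W₁ + (P.restrict B).map W₁ +
      (P.restrict (A ∪ B)ᶜ).map W₁ := by
    conv_lhs => rw [split hA hB hAB]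
    rw [Measure.map_add _ _ hW₁, Measure.map_add _ _ hW₁]
  have e2 : P.map W = (P.restrict A').map W + (P.restrict B').map W +
      (P.restrict (A' ∪ B')ᶜ).map W := by
    conv_lhs => rw [split hA' hB' hAB']
    rw [Measure.map_add _ _ hW, Measure.map_add _ _ hW]
  rw [e1, e2, congr_on hA eA, congr_on hB eB, congr_on (hA.union hB).compl eC, lA, lB, lC]

lemma Nonconstant.measure_pos {P : Measure Ω} [IsProbabilityMeasure P] {Y : Ω → ℝ}
    (hY : Integrable Y P) (hn : Nonconstant P Y) :
    0 < P {ω | ∫ ω, Y ω ∂P < Y ω} ∧ 0 < P {ω | Y ω < ∫ ω, Y ω ∂P} := by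
  set m := ∫ ω, Y ω ∂P with hm
  have hint : ∫ ω, (Y ω - m) ∂P = 0 := by
    rw [integral_sub hY (integrable_const _)]
    simp [hm]
  have hYm : Integrable (fun ω => Y ω - m) P := hY.sub (integrable_const _)
  constructor
  · rw [pos_iff_ne_zero]
    intro h0
    have hle : ∀ᵐ ω ∂P, Y ω ≤ m := by
      rw [ae_iff]
      simpa using h0
    have h1 : 0 ≤ᵐ[P] fun ω => -(Y ω - m) := by
      filter_upwards [hle] with ω hω
      simpa using hω
    have h2 := (integral_eq_zero_iff_of_nonneg_ae h1 hYm.neg).1 (by rw [integral_neg, hint, neg_zero])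
    refine hn m ?_
    filter_upwards [h2] with ω hω
    simp only [Pi.zero_apply] at hω
    linarith
  · rw [pos_iff_ne_zero]
    intro h0
    have hle : ∀ᵐ ω ∂P, m ≤ Y ω := by
      rw [ae_iff]
      simpa using h0
    have h1 : 0 ≤ᵐ[P] fun ω => Y ω - m := by
      filter_upwards [hle] with ω hω
      simpa using hω
    have h2 := (integral_eq_zero_iff_of_nonneg_ae h1 hYm).1 hint
    refine hn m ?_
    filter_upwards [h2] with ω hω
    simp only [Pi.zero_apply] at hω
    linarith

/-- If `Y` and `Z` are both nonconstant, then `(X, Z)` has two rearrangements `W₁` and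
`W₂` whose second components are ordered differently with respect to `Y`: the values of `Z`
above its mean and those below its mean are put on `{Y > y}` and `{Y < y}` respectively, and the
other way round. -/
lemma exists_rearrangements {P : Measure Ω} [IsProbabilityMeasure P] (hP : IsAtomless P)
    {X Z Y : Ω → ℝ} (hX : Measurable X) (hZ : Measurable Z) (hY : Measurable Y)
    (hZi : Integrable Z P) (hYi : Integrable Y P)
    (hZn : Nonconstant P Z) (hYn : Nonconstant P Y) :
    ∃ W₁ W₂ : Ω → ℝ × ℝ, Measurable W₁ ∧ Measurable W₂ ∧
      P.map W₁ = P.map (fun ω => (X ω, Z ω)) ∧ P.map W₂ = P.map (fun ω => (X ω, Z ω)) ∧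
      ∃ y : ℝ, (0 ≤ᵐ[P] fun ω => ((W₁ ω).2 - (W₂ ω).2) * (Y ω - y)) ∧
        ¬ (fun ω => ((W₁ ω).2 - (W₂ ω).2) * (Y ω - y)) =ᵐ[P] 0 := by
  classical
  set y := ∫ ω, Y ω ∂P
  set z := ∫ ω, Z ω ∂P
  obtain ⟨hYp, hYm⟩ := Nonconstant.measure_pos hYi hYn
  obtain ⟨hZp, hZm⟩ := Nonconstant.measure_pos hZi hZn
  set p := min (min (P {ω | y < Y ω}) (P {ω | Y ω < y}))
    (min (P {ω | z < Z ω}) (P {ω | Z ω < z})) with hp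
  have hp0 : 0 < p := lt_min (lt_min hYp hYm) (lt_min hZp hZm)
  obtain ⟨A, hAs, hA, hAp⟩ := exists_subset_measure_eq hP (measurableSet_lt measurable_const hY)
    (show p ≤ P {ω | y < Y ω} from (min_le_left _ _).trans (min_le_left _ _))
  obtain ⟨B, hBs, hB, hBp⟩ := exists_subset_measure_eq hP (measurableSet_lt hY measurable_const)
    (show p ≤ P {ω | Y ω < y} from (min_le_left _ _).trans (min_le_right _ _))
  obtain ⟨A', hAs', hA', hAp'⟩ := exists_subset_measure_eq hP
    (measurableSet_lt measurable_const hZ)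
    (show p ≤ P {ω | z < Z ω} from (min_le_right _ _).trans (min_le_left _ _))
  obtain ⟨B', hBs', hB', hBp'⟩ := exists_subset_measure_eq hP
    (measurableSet_lt hZ measurable_const)
    (show p ≤ P {ω | Z ω < z} from (min_le_right _ _).trans (min_le_right _ _))
  have hAB : Disjoint A B := disjoint_left.2 fun ω h1 h2 => lt_asymm (show y < Y ω from hAs h1) (hBs h2)
  have hAB' : Disjoint A' B' := disjoint_left.2 fun ω h1 h2 =>
    lt_asymm (show z < Z ω from hAs' h1) (hBs' h2)
  have hC : P (A ∪ B)ᶜ = P (A' ∪ B')ᶜ := by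
    rw [measure_compl (hA.union hB) (measure_ne_top _ _),
      measure_compl (hA'.union hB') (measure_ne_top _ _), measure_union hAB hB,
      measure_union hAB' hB', hAp, hBp, hAp', hBp']
  let W : Ω → ℝ × ℝ := fun ω => (X ω, Z ω)
  have hW : Measurable W := hX.prodMk hZ
  have transfer : ∀ {D D' : Set Ω}, MeasurableSet D → P D = P D' →
      ∃ f : Ω → ℝ × ℝ, Measurable f ∧ (P.restrict D).map f = (P.restrict D').map W := by
    intro D D' hD hDD
    refine exists_map_eq _ (hP.restrict hD) _ ?_
    rw [Measure.map_apply hW .univ]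
    simp [hDD]
  obtain ⟨fA, mfA, lA⟩ := transfer (D := A) (D' := A') hA (hAp.trans hAp'.symm)
  obtain ⟨fB, mfB, lB⟩ := transfer (D := B) (D' := B') hB (hBp.trans hBp'.symm)
  obtain ⟨gA, mgA, kA⟩ := transfer (D := A) (D' := B') hA (hAp.trans hBp'.symm)
  obtain ⟨gB, mgB, kB⟩ := transfer (D := B) (D' := A') hB (hBp.trans hAp'.symm)
  obtain ⟨h, mh, lC⟩ := transfer (hA.union hB).compl hC
  let W₁ : Ω → ℝ × ℝ := A.piecewise fA (B.piecewise fB h)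
  let W₂ : Ω → ℝ × ℝ := A.piecewise gA (B.piecewise gB h)
  have mW₁ : Measurable W₁ := mfA.piecewise hA (mfB.piecewise hB mh)
  have mW₂ : Measurable W₂ := mgA.piecewise hA (mgB.piecewise hB mh)
  have pA : ∀ (f g : Ω → ℝ × ℝ), ∀ ω ∈ A, A.piecewise f (B.piecewise g h) ω = f ω :=
    fun f g ω hω => piecewise_eq_of_mem _ _ _ hω
  have pB : ∀ (f g : Ω → ℝ × ℝ), ∀ ω ∈ B, A.piecewise f (B.piecewise g h) ω = g ω := by
    intro f g ω hω
    rw [piecewise_eq_of_notMem _ _ _ (disjoint_right.1 hAB hω), piecewise_eq_of_mem _ _ _ hω]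
  have pC : ∀ (f g : Ω → ℝ × ℝ), ∀ ω ∈ (A ∪ B)ᶜ, A.piecewise f (B.piecewise g h) ω = h ω := by
    intro f g ω hω
    rw [piecewise_eq_of_notMem _ _ _ fun hmem => hω (Or.inl hmem),
      piecewise_eq_of_notMem _ _ _ fun hmem => hω (Or.inr hmem)]
  -- bounds on `Z` over `D'` pass to the transferred map over `D`
  have trans_ae : ∀ {D D' : Set Ω} {f : Ω → ℝ × ℝ}, MeasurableSet D → MeasurableSet D' →
      Measurable f → (P.restrict D).map f = (P.restrict D').map W → ∀ {T : Set ℝ},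
      MeasurableSet T → (∀ ω ∈ D', Z ω ∈ T) → ∀ᵐ ω ∂P, ω ∈ D → (f ω).2 ∈ T := by
    intro D D' f hD hD' hf hl T hT hZT
    have hS : MeasurableSet {w : ℝ × ℝ | w.2 ∈ T} := measurable_snd hT
    rw [← ae_restrict_iff' hD]
    have h1 : ∀ᵐ w ∂(P.restrict D').map W, w.2 ∈ T := by
      rw [ae_map_iff hW.aemeasurable hS]
      filter_upwards [ae_restrict_mem hD'] with ω hω using hZT ω hω
    rw [← hl, ae_map_iff hf.aemeasurable hS] at h1
    exact h1
  have aA := trans_ae hA hA' mfA lA measurableSet_Ioi (T := Ioi z) fun ω hω => hAs' hω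
  have aB := trans_ae hB hB' mfB lB measurableSet_Iio (T := Iio z) fun ω hω => hBs' hω
  have bA := trans_ae hA hB' mgA kA measurableSet_Iio (T := Iio z) fun ω hω => hBs' hω
  have bB := trans_ae hB hA' mgB kB measurableSet_Ioi (T := Ioi z) fun ω hω => hAs' hω
  have posA : ∀ᵐ ω ∂P, ω ∈ A → 0 < ((W₁ ω).2 - (W₂ ω).2) * (Y ω - y) := by
    filter_upwards [aA, bA] with ω h1 h2 hω
    have h1 := h1 hω
    have h2 := h2 hω
    simp only [mem_Ioi, mem_Iio] at h1 h2
    rw [show W₁ ω = fA ω from pA _ _ ω hω, show W₂ ω = gA ω from pA _ _ ω hω]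
    exact mul_pos (by linarith) (sub_pos.2 (hAs hω))
  refine ⟨W₁, W₂, mW₁, mW₂, ?_, ?_, y, ?_, ?_⟩
  · exact map_glue P hA hB hA' hB' hAB hAB' hW mW₁ (pA _ _) (pB _ _) (pC _ _) lA lB lC
  · refine map_glue P hA hB hB' hA' hAB hAB'.symm hW mW₂ (pA _ _) (pB _ _) (pC _ _)
      kA kB ?_
    rwa [union_comm B' A']
  · filter_upwards [posA, aB, bB] with ω hωA h1 h2
    by_cases hA1 : ω ∈ A
    · exact (hωA hA1).le
    by_cases hB1 : ω ∈ B
    · have h1 := h1 hB1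
      have h2 := h2 hB1
      simp only [mem_Ioi, mem_Iio] at h1 h2
      rw [show W₁ ω = fB ω from pB _ _ ω hB1, show W₂ ω = gB ω from pB _ _ ω hB1]
      exact (mul_pos_of_neg_of_neg (by linarith) (sub_neg.2 (hBs hB1))).le
    · have hω : ω ∈ (A ∪ B)ᶜ := fun h' => h'.elim hA1 hB1
      rw [show W₁ ω = h ω from pC _ _ ω hω, show W₂ ω = h ω from pC _ _ ω hω]
      simp
  · intro h0
    have : P A = 0 := by
      refine measure_mono_null (fun ω hω => ?_) (ae_iff.1 (posA.and h0))
      rintro ⟨h1, h2⟩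
      exact (h1 hω).ne' h2
    rw [hAp] at this
    exact hp0.ne' this

/-! ### Separation and the conjugate -/

lemma PairedSpaces.sum_dual {P : Measure Ω} (pr : PairedSpaces P) {ι : Type*} (s : Finset ι)
    (Y : ι → Ω → ℝ) (hY : ∀ i ∈ s, Y i ∈ pr.dual) (c : ι → ℝ) :
    (fun ω => ∑ i ∈ s, c i * Y i ω) ∈ pr.dual := by
  classical
  induction s using Finset.induction_on with
  | empty => exact pr.linf_dual _ ⟨by simp, 0, by simp⟩
  | insert i s hi ih =>
    simp only [Finset.sum_insert hi]
    exact pr.add_dual _ (pr.smul_dual _ (hY i (Finset.mem_insert_self _ _)) _) _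
      (ih fun j hj => hY j (Finset.mem_insert_of_mem hj))

lemma PairedSpaces.const_carrier {P : Measure Ω} (pr : PairedSpaces P) (c : ℝ) :
    (fun _ => c) ∈ pr.carrier :=
  pr.linf_carrier _ ⟨measurable_const, |c|, by simp⟩

lemma PairedSpaces.const_dual {P : Measure Ω} (pr : PairedSpaces P) (c : ℝ) :
    (fun _ => c) ∈ pr.dual :=
  pr.linf_dual _ ⟨measurable_const, |c|, by simp⟩

/-- Hahn–Banach separation of a point `(X₀, m)` strictly below the graph from the epigraph of `φ`.
The hyperplane is vertical when `s = 0`. Lower semicontinuity at `X₀` involves only finitely many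
`Y ∈ 𝒳*`, so the separation takes place in a finite-dimensional space. -/
lemma exists_separation {P : Measure Ω} (pr : PairedSpaces P) {φ : (Ω → ℝ) → EReal}
    (hproper : ∃ X ∈ pr.carrier, φ X ≠ (⊤ : EReal))
    (hconv : ConvexFn pr.carrier φ) (hlsc : WeakLSC P pr φ)
    {X₀ : Ω → ℝ} (hX₀ : X₀ ∈ pr.carrier) {m : ℝ} (hm : (m : EReal) < φ X₀) :
    ∃ Y ∈ pr.dual, ∃ s : ℝ, 0 ≤ s ∧ ∃ α : ℝ,
      (∀ X ∈ pr.carrier, ∀ r : ℝ, φ X ≤ (r : EReal) → (∫ ω, X ω * Y ω ∂P) - s * r ≤ α) ∧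
      α < (∫ ω, X₀ ω * Y ω ∂P) - s * m := by
  classical
  obtain ⟨m', hmm', hm'⟩ := EReal.lt_iff_exists_real_btwn.1 hm
  have hmm : m < m' := by exact_mod_cast hmm'
  have hopen := (hlsc m').isOpen_compl
  obtain ⟨O, hO, hOeq⟩ := isOpen_induced_iff.1 hopen
  have hmemO : ∀ X : pr.carrier, (fun Y : ↥pr.dual => ∫ ω, X.1 ω * Y.1 ω ∂P) ∈ O ↔
      ¬ φ X.1 ≤ (m' : EReal) := by
    intro X
    have : X ∈ (fun X : ↥pr.carrier => (fun Y : ↥pr.dual => ∫ ω, X.1 ω * Y.1 ω ∂P)) ⁻¹' O ↔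
      X ∈ {X : ↥pr.carrier | (X : Ω → ℝ) ∈ {X | X ∈ pr.carrier ∧ φ X ≤ (m' : EReal)}}ᶜ := by
      rw [hOeq]
    simpa using this
  obtain ⟨I, u, hu, huO⟩ := isOpen_pi_iff.1 hO _ ((hmemO ⟨X₀, hX₀⟩).2 (not_le.2 hm'))
  let T : (Ω → ℝ) → (I → ℝ) := fun X i => ∫ ω, X ω * i.1.1 ω ∂P
  let K : Set ((I → ℝ) × ℝ) := {v | ∃ X ∈ pr.carrier, ∃ r : ℝ, φ X ≤ (r : EReal) ∧ v = (T X, r)}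
  have hK : Convex ℝ K := by
    rintro _ ⟨X, hX, r, hr, rfl⟩ _ ⟨X', hX', r', hr', rfl⟩ a b ha hb hab
    obtain rfl : b = 1 - a := by linarith
    refine ⟨fun ω => a * X ω + (1 - a) * X' ω,
      pr.add_carrier _ (pr.smul_carrier X hX a) _ (pr.smul_carrier X' hX' (1 - a)),
      a * r + (1 - a) * r', ?_, ?_⟩
    · refine (hconv X hX X' hX' a ⟨ha, by linarith⟩).trans ?_
      rw [EReal.coe_add, EReal.coe_mul, EReal.coe_mul]
      exact add_le_add (mul_le_mul_of_nonneg_left hr (by exact_mod_cast ha))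
        (mul_le_mul_of_nonneg_left hr' (by exact_mod_cast hb))
    · ext i
      · simp only [Prod.smul_mk, Prod.mk_add_mk, Pi.add_apply, Pi.smul_apply, smul_eq_mul, T]
        have e : ∀ ω, (a * X ω + (1 - a) * X' ω) * i.1.1 ω =
            a * (X ω * i.1.1 ω) + (1 - a) * (X' ω * i.1.1 ω) := fun ω => by ring
        simp only [e]
        rw [integral_add ((pr.mul_int X hX _ i.1.2).const_mul _)
          ((pr.mul_int X' hX' _ i.1.2).const_mul _), integral_const_mul, integral_const_mul]
      · simp
  have hnot : (T X₀, m) ∉ closure K := by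
    intro hcl
    have hV : IsOpen ((Set.univ.pi fun i : I => u i.1) ×ˢ Iio m') :=
      (isOpen_set_pi finite_univ fun i _ => (hu i.1 i.2).1).prod isOpen_Iio
    obtain ⟨_, ⟨h1, h2⟩, X, hX, r, hr, rfl⟩ := mem_closure_iff.1 hcl _ hV
      ⟨fun i _ => (hu i.1 i.2).2, hmm⟩
    refine (hmemO ⟨X, hX⟩).1 (huO fun i hi => h1 ⟨i, hi⟩ (mem_univ _)) (hr.trans ?_)
    exact_mod_cast (show r < m' from h2).le
  obtain ⟨f, α, hfK, hf0⟩ := geometric_hahn_banach_closed_point hK.closure isClosed_closure hnot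
  let c : I → ℝ := fun i => f (Pi.single i 1, 0)
  let κ : ℝ := f (0, 1)
  let Y : Ω → ℝ := fun ω => ∑ i : I, c i * i.1.1 ω
  have hY : Y ∈ pr.dual := pr.sum_dual Finset.univ (fun i : I => i.1.1) (fun i _ => i.1.2) c
  have hint : ∀ X ∈ pr.carrier, ∫ ω, X ω * Y ω ∂P = ∑ i : I, c i * T X i := by
    intro X hX
    have e : ∀ ω, X ω * Y ω = ∑ i : I, c i * (X ω * i.1.1 ω) := by
      intro ω
      simp only [Y, Finset.mul_sum]
      exact Finset.sum_congr rfl fun i _ => by ring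
    simp only [e]
    rw [integral_finsetSum _ fun i _ => (pr.mul_int X hX _ i.1.2).const_mul _]
    exact Finset.sum_congr rfl fun i _ => integral_const_mul _ _
  have hf : ∀ X ∈ pr.carrier, ∀ r : ℝ, f (T X, r) = (∫ ω, X ω * Y ω ∂P) - (-κ) * r := by
    intro X hX r
    have e1 : (T X, r) = (T X, (0 : ℝ)) + r • ((0 : I → ℝ), (1 : ℝ)) := by simp
    have e2 : f (T X, 0) = ∑ i : I, T X i • f (Pi.single i 1, 0) := by
      have := LinearMap.pi_apply_eq_sum_univ
        (f.toLinearMap.comp (LinearMap.inl ℝ (I → ℝ) ℝ)) (T X)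
      have e3 : ∀ i : I, (fun j => if i = j then (1 : ℝ) else 0) = Pi.single i 1 := by
        intro i
        ext j
        simp [Pi.single_apply, eq_comm]
      simp only [e3] at this
      exact this
    rw [e1, map_add, map_smul, e2, hint X hX]
    simp only [smul_eq_mul, c, κ]
    rw [Finset.sum_congr rfl fun i _ => mul_comm (T X i) (f (Pi.single i 1, 0))]
    ring
  have hbd : ∀ X ∈ pr.carrier, ∀ r : ℝ, φ X ≤ (r : EReal) →
      (∫ ω, X ω * Y ω ∂P) - (-κ) * r ≤ α := fun X hX r hr => by
    rw [← hf X hX r]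
    exact (hfK _ (subset_closure ⟨X, hX, r, hr, rfl⟩)).le
  refine ⟨Y, hY, -κ, ?_, α, hbd, ?_⟩
  · -- the epigraph is upward closed, so the functional cannot increase in the last coordinate
    obtain ⟨X, hX, hXt⟩ := hproper
    by_contra hneg
    have hκ : 0 < κ := by linarith
    have hle : φ X ≤ ((φ X).toReal : EReal) := EReal.le_coe_toReal hXt
    set b := ∫ ω, X ω * Y ω ∂P
    have hr : φ X ≤ ((max (φ X).toReal ((α - b + 1) / κ) : ℝ) : EReal) :=
      hle.trans (by exact_mod_cast le_max_left _ _)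
    have h1 := hbd X hX _ hr
    have h2 : κ * ((α - b + 1) / κ) ≤ κ * max (φ X).toReal ((α - b + 1) / κ) :=
      mul_le_mul_of_nonneg_left (le_max_right _ _) hκ.le
    rw [mul_div_cancel₀ _ hκ.ne'] at h2
    linarith
  · rw [← hf X₀ hX₀ m]
    exact hf0

lemma conj_le {P : Measure Ω} {𝒳 : Set (Ω → ℝ)} {φ : (Ω → ℝ) → EReal} {Y : Ω → ℝ} {α : ℝ}
    (hbot : ∀ X ∈ 𝒳, φ X ≠ (⊥ : EReal))
    (h : ∀ X ∈ 𝒳, ∀ r : ℝ, φ X = (r : EReal) → (∫ ω, X ω * Y ω ∂P) - r ≤ α) :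
    conj P 𝒳 φ Y ≤ (α : EReal) := by
  refine iSup₂_le fun X hX => ?_
  have hb := hbot X hX
  cases hφ : φ X with
  | bot => exact absurd hφ hb
  | top => simp
  | coe r =>
    have := h X hX r hφ
    exact_mod_cast this

lemma le_of_conj_eq {P : Measure Ω} {𝒳 : Set (Ω → ℝ)} {φ : (Ω → ℝ) → EReal} {Y X : Ω → ℝ}
    {c r : ℝ} (hX : X ∈ 𝒳) (hφ : φ X = (r : EReal)) (h : conj P 𝒳 φ Y ≤ (c : EReal)) :
    (∫ ω, X ω * Y ω ∂P) - r ≤ c := by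
  have h1 : ((∫ ω, X ω * Y ω ∂P : ℝ) : EReal) - φ X ≤ conj P 𝒳 φ Y :=
    le_iSup₂ (f := fun X (_ : X ∈ 𝒳) => ((∫ ω, X ω * Y ω ∂P : ℝ) : EReal) - φ X) X hX
  rw [hφ] at h1
  exact_mod_cast h1.trans h

lemma conj_real_of_le {P : Measure Ω} {𝒳 : Set (Ω → ℝ)} {φ : (Ω → ℝ) → EReal} {Y X : Ω → ℝ}
    {c r : ℝ} (hX : X ∈ 𝒳) (hφ : φ X = (r : EReal)) (h : conj P 𝒳 φ Y ≤ (c : EReal)) :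
    ∃ s : ℝ, conj P 𝒳 φ Y = (s : EReal) := by
  have h1 : ((∫ ω, X ω * Y ω ∂P : ℝ) : EReal) - φ X ≤ conj P 𝒳 φ Y :=
    le_iSup₂ (f := fun X (_ : X ∈ 𝒳) => ((∫ ω, X ω * Y ω ∂P : ℝ) : EReal) - φ X) X hX
  rw [hφ, ← EReal.coe_sub] at h1
  refine ⟨_, (EReal.coe_toReal ?_ ?_).symm⟩
  · exact ne_of_lt (h.trans_lt (EReal.coe_lt_top _))
  · exact ne_of_gt ((EReal.bot_lt_coe _).trans_le h1)

lemma conj_congr {P : Measure Ω} {𝒳 : Set (Ω → ℝ)} {φ : (Ω → ℝ) → EReal} {Y Y' : Ω → ℝ}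
    (h : Y =ᵐ[P] Y') : conj P 𝒳 φ Y = conj P 𝒳 φ Y' := by
  unfold conj
  have : ∀ X : Ω → ℝ, ∫ ω, X ω * Y ω ∂P = ∫ ω, X ω * Y' ω ∂P := fun X =>
    integral_congr_ae (by filter_upwards [h] with ω hω; rw [hω])
  simp only [this]

/-- A non-vertical separating hyperplane is, after rescaling, an element of `dom φ*`. -/
lemma conj_div_le {P : Measure Ω} {𝒳 : Set (Ω → ℝ)} {φ : (Ω → ℝ) → EReal} {Y : Ω → ℝ}
    {s α : ℝ} (hs : 0 < s) (hbot : ∀ X ∈ 𝒳, φ X ≠ (⊥ : EReal))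
    (h : ∀ X ∈ 𝒳, ∀ r : ℝ, φ X ≤ (r : EReal) → (∫ ω, X ω * Y ω ∂P) - s * r ≤ α) :
    conj P 𝒳 φ (fun ω => s⁻¹ * Y ω) ≤ ((s⁻¹ * α : ℝ) : EReal) := by
  refine conj_le hbot fun X hX r hr => ?_
  have e : ∀ ω, X ω * (s⁻¹ * Y ω) = s⁻¹ * (X ω * Y ω) := fun ω => by ring
  simp only [e]
  rw [integral_const_mul]
  have h1 := mul_le_mul_of_nonneg_left (h X hX r hr.le) (inv_pos.2 hs).le
  have h2 : s⁻¹ * ((∫ ω, X ω * Y ω ∂P) - s * r) = s⁻¹ * (∫ ω, X ω * Y ω ∂P) - r := by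
    field_simp
  linarith

/-! ### The equivalences -/

/-- If `φ` is affine along a single line `X + tZ` through its domain, with `Z` nonconstant
and `E[Z] ≠ 0`, then `dom φ*` consists of exactly one a.s. constant. -/
lemma dom_conj_of_line {P : Measure Ω} [IsProbabilityMeasure P] (hP : IsAtomless P)
    (pr : PairedSpaces P) {φ : (Ω → ℝ) → EReal}
    (hbot : ∀ X ∈ pr.carrier, φ X ≠ (⊥ : EReal))
    (hconv : ConvexFn pr.carrier φ) (hlsc : WeakLSC P pr φ)
    (hlaw : LawInvariantFn P pr.carrier φ) {a : ℝ} {X Z : Ω → ℝ}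
    (hX : X ∈ pr.carrier) (hZ : Z ∈ pr.carrier) (hZn : Nonconstant P Z)
    (hZ0 : (∫ ω, Z ω ∂P) ≠ 0) (hXt : φ X ≠ (⊤ : EReal))
    (hline : ∀ t : ℝ, φ (fun ω => X ω + t * Z ω) = φ X + ((a * t : ℝ) : EReal)) :
    ∃ c : ℝ, ∀ Y ∈ pr.dual,
      ((∃ r : ℝ, conj P pr.carrier φ Y = (r : EReal)) ↔ Y =ᵐ[P] fun _ => c) := by
  obtain ⟨x, hx⟩ : ∃ x : ℝ, φ X = (x : EReal) := ⟨_, (EReal.coe_toReal hXt (hbot X hX)).symm⟩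
  have mX := pr.meas_carrier X hX
  have mZ := pr.meas_carrier Z hZ
  -- boundedness of `t ↦ E[(X' + tZ')Y] - φ(X' + tZ')` for every copy `(X', Z')` of `(X, Z)`
  have hpair : ∀ Y ∈ pr.dual, (∃ r : ℝ, conj P pr.carrier φ Y = (r : EReal)) →
      ∀ W : Ω → ℝ × ℝ, Measurable W → P.map W = P.map (fun ω => (X ω, Z ω)) →
      (fun ω => (W ω).2) ∈ pr.carrier ∧ ∫ ω, (W ω).2 * Y ω ∂P = a ∧
        ∫ ω, (W ω).2 ∂P = ∫ ω, Z ω ∂P := by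
    rintro Y hY ⟨r, hr⟩ W hW hlawW
    have same : ∀ g : ℝ × ℝ → ℝ, Measurable g →
        SameLaw P (fun ω => g (W ω)) (fun ω => g (X ω, Z ω)) := by
      intro g hg
      have := congrArg (Measure.map g) hlawW
      rwa [Measure.map_map hg hW, Measure.map_map hg (mX.prodMk mZ)] at this
    have h1 : (fun ω => (W ω).1) ∈ pr.carrier :=
      pr.lawinv_carrier X hX _ hW.fst (same Prod.fst measurable_fst)
    have h2 : (fun ω => (W ω).2) ∈ pr.carrier :=
      pr.lawinv_carrier Z hZ _ hW.snd (same Prod.snd measurable_snd)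
    have hval : ∀ t : ℝ, φ (fun ω => (W ω).1 + t * (W ω).2) = ((x + a * t : ℝ) : EReal) := by
      intro t
      rw [hlaw _ (pr.add_carrier _ h1 _ (pr.smul_carrier _ h2 t)) _
        (pr.add_carrier _ hX _ (pr.smul_carrier _ hZ t))
        (same (fun w => w.1 + t * w.2) (by fun_prop)), hline t, hx, EReal.coe_add]
    have hineq : ∀ t : ℝ, (∫ ω, (W ω).1 * Y ω ∂P) - x - r +
        t * ((∫ ω, (W ω).2 * Y ω ∂P) - a) ≤ 0 := by
      intro t
      have h3 := le_of_conj_eq (pr.add_carrier _ h1 _ (pr.smul_carrier _ h2 t)) (hval t) hr.le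
      have e : ∀ ω, ((W ω).1 + t * (W ω).2) * Y ω =
          (W ω).1 * Y ω + t * ((W ω).2 * Y ω) := fun ω => by ring
      simp only [e] at h3
      rw [integral_add (pr.mul_int _ h1 Y hY) ((pr.mul_int _ h2 Y hY).const_mul t),
        integral_const_mul] at h3
      linarith
    refine ⟨h2, ?_, ?_⟩
    · set A := (∫ ω, (W ω).1 * Y ω ∂P) - x - r
      set B := (∫ ω, (W ω).2 * Y ω ∂P) - a with hB
      have hB0 : B = 0 := by
        by_contra hne
        have := hineq ((1 - A) / B)
        rw [div_mul_cancel₀ _ hne] at this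
        linarith
      linarith
    · have e1 := integral_map (μ := P) (φ := fun ω => (W ω).2) hW.snd.aemeasurable
        (f := id) measurable_id.aestronglyMeasurable
      have e2 := integral_map (μ := P) (φ := Z) mZ.aemeasurable
        (f := id) measurable_id.aestronglyMeasurable
      rw [show P.map (fun ω => (W ω).2) = P.map Z from same Prod.snd measurable_snd] at e1
      exact e1.symm.trans e2
  have hconst : ∀ Y ∈ pr.dual, (∃ r : ℝ, conj P pr.carrier φ Y = (r : EReal)) →
      Y =ᵐ[P] fun _ => a / ∫ ω, Z ω ∂P := by
    intro Y hY hr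
    by_cases hYn : Nonconstant P Y
    · exfalso
      obtain ⟨W₁, W₂, m1, m2, l1, l2, y, hnn, hne⟩ := exists_rearrangements hP mX mZ
        (pr.meas_dual Y hY) (pr.int_carrier Z hZ) (pr.int_dual Y hY) hZn hYn
      obtain ⟨c1, i1, j1⟩ := hpair Y hY hr W₁ m1 l1
      obtain ⟨c2, i2, j2⟩ := hpair Y hY hr W₂ m2 l2
      have k1 := pr.mul_int _ c1 Y hY
      have k2 := pr.mul_int _ c2 Y hY
      have n1 := (pr.int_carrier _ c1).const_mul y
      have n2 := (pr.int_carrier _ c2).const_mul y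
      have k : Integrable (fun ω => (W₁ ω).2 * Y ω - (W₂ ω).2 * Y ω) P := k1.sub k2
      have n : Integrable (fun ω => y * (W₁ ω).2 - y * (W₂ ω).2) P := n1.sub n2
      have e : (fun ω => ((W₁ ω).2 - (W₂ ω).2) * (Y ω - y)) = fun ω =>
          ((W₁ ω).2 * Y ω - (W₂ ω).2 * Y ω) - (y * (W₁ ω).2 - y * (W₂ ω).2) := by
        ext ω; ring
      rw [e] at hnn hne
      refine hne ((integral_eq_zero_iff_of_nonneg_ae hnn (k.sub n)).1 ?_)
      rw [integral_sub k n, integral_sub k1 k2, integral_sub n1 n2,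
        integral_const_mul, integral_const_mul, i1, i2, j1, j2]
      ring
    · obtain ⟨c, hc⟩ : ∃ c : ℝ, Y =ᵐ[P] fun _ => c := by
        simpa [Nonconstant] using hYn
      obtain ⟨-, h2, -⟩ := hpair Y hY hr _ (mX.prodMk mZ) rfl
      have h3 : ∫ ω, Z ω * Y ω ∂P = (∫ ω, Z ω ∂P) * c := by
        rw [← integral_mul_const]
        exact integral_congr_ae (by filter_upwards [hc] with ω hω; rw [hω])
      have hca : c = a / ∫ ω, Z ω ∂P := by
        rw [eq_div_iff hZ0, mul_comm, ← h3]
        exact h2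
      rwa [← hca]
  -- `dom φ*` is nonempty: the hyperplane through a point below the graph over `X ∈ dom φ`
  -- cannot be vertical
  obtain ⟨Y₀, hY₀, hr₀⟩ : ∃ Y ∈ pr.dual, ∃ r : ℝ, conj P pr.carrier φ Y = (r : EReal) := by
    obtain ⟨Y, hY, s, hs, α, hb, hlt⟩ := exists_separation pr ⟨X, hX, hXt⟩ hconv hlsc hX
      (m := x - 1) (by rw [hx]; exact_mod_cast sub_one_lt x)
    have hs0 : 0 < s := by
      have := hb X hX x hx.le
      nlinarith
    exact ⟨_, pr.smul_dual Y hY s⁻¹, conj_real_of_le hX hx (conj_div_le hs0 hbot hb)⟩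
  refine ⟨a / ∫ ω, Z ω ∂P, fun Y hY => ⟨hconst Y hY, fun h => ?_⟩⟩
  rw [conj_congr (h.trans (hconst Y₀ hY₀ hr₀).symm)]
  exact hr₀

/-- Fenchel–Moreau in the case where `dom φ*` is a single constant. -/
lemma affine_of_dom_conj {P : Measure Ω} [IsProbabilityMeasure P]
    (pr : PairedSpaces P) {φ : (Ω → ℝ) → EReal}
    (hbot : ∀ X ∈ pr.carrier, φ X ≠ (⊥ : EReal))
    (hproper : ∃ X ∈ pr.carrier, φ X ≠ (⊤ : EReal))
    (hconv : ConvexFn pr.carrier φ) (hlsc : WeakLSC P pr φ) {c : ℝ}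
    (hc : ∀ Y ∈ pr.dual,
      ((∃ r : ℝ, conj P pr.carrier φ Y = (r : EReal)) ↔ Y =ᵐ[P] fun _ => c)) :
    ∃ a b : ℝ, ∀ X ∈ pr.carrier, φ X = ((a * (∫ ω, X ω ∂P) + b : ℝ) : EReal) := by
  obtain ⟨r, hr⟩ := (hc _ (pr.const_dual c)).2 (ae_eq_refl _)
  have hcX : ∀ X : Ω → ℝ, ∫ ω, X ω * c ∂P = c * ∫ ω, X ω ∂P := fun X => by
    rw [integral_mul_const, mul_comm]
  obtain ⟨X', hX', hX't⟩ := id hproper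
  obtain ⟨x', hx'⟩ : ∃ x : ℝ, φ X' = (x : EReal) :=
    ⟨_, (EReal.coe_toReal hX't (hbot X' hX')).symm⟩
  refine ⟨c, -r, fun X hX => le_antisymm ?_ ?_⟩
  · by_contra hlt
    obtain ⟨m, hm1, hm2⟩ := EReal.lt_iff_exists_real_btwn.1 (not_le.1 hlt)
    have hm1 : c * (∫ ω, X ω ∂P) + -r < m := by exact_mod_cast hm1
    obtain ⟨Y, hY, s, hs, α, hb, hα⟩ := exists_separation pr hproper hconv hlsc hX hm2
    rcases hs.eq_or_lt with rfl | hs0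
    · -- a vertical hyperplane is a direction of recession of `dom φ*`
      have hle : conj P pr.carrier φ (fun ω => c + Y ω) ≤ ((r + α : ℝ) : EReal) := by
        refine conj_le hbot fun X₁ hX₁ x₁ hx₁ => ?_
        have h1 := le_of_conj_eq hX₁ hx₁ hr.le
        have h2 := hb X₁ hX₁ x₁ hx₁.le
        have e : ∀ ω, X₁ ω * (c + Y ω) = X₁ ω * c + X₁ ω * Y ω := fun ω => by ring
        simp only [e]
        rw [integral_add ((pr.int_carrier X₁ hX₁).mul_const c) (pr.mul_int X₁ hX₁ Y hY)]
        linarith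
      have h3 := (hc _ (pr.add_dual _ (pr.const_dual c) Y hY)).1 (conj_real_of_le hX' hx' hle)
      have hY0 : ∀ X₁ : Ω → ℝ, ∫ ω, X₁ ω * Y ω ∂P = 0 := by
        intro X₁
        refine integral_eq_zero_of_ae ?_
        filter_upwards [h3] with ω hω
        have : Y ω = 0 := by linarith
        simp [this]
      have h4 := hb X' hX' x' hx'.le
      rw [hY0] at h4 hα
      linarith
    · have hle := conj_div_le hs0 hbot hb
      have h3 := (hc _ (pr.smul_dual Y hY s⁻¹)).1 (conj_real_of_le hX' hx' hle)
      rw [conj_congr h3, hr] at hle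
      have hle : r ≤ s⁻¹ * α := by exact_mod_cast hle
      have h4 : ∫ ω, X ω * Y ω ∂P = s * (c * ∫ ω, X ω ∂P) := by
        rw [← hcX, ← integral_const_mul]
        refine integral_congr_ae ?_
        filter_upwards [h3] with ω hω
        rw [← hω]
        field_simp
      rw [h4] at hα
      have h5 : s * r ≤ α := by
        have := mul_le_mul_of_nonneg_left hle hs0.le
        rwa [mul_inv_cancel_left₀ hs0.ne'] at this
      have h6 : 0 < s * (m - (c * (∫ ω, X ω ∂P) + -r)) := mul_pos hs0 (by linarith)
      linarith
  · cases hφ : φ X with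
    | bot => exact absurd hφ (hbot X hX)
    | top => exact le_top
    | coe x =>
      have := le_of_conj_eq hX hφ hr.le
      rw [hcX] at this
      exact_mod_cast (by linarith : c * (∫ ω, X ω ∂P) + -r ≤ x)

lemma exists_nonconstant {P : Measure Ω} [IsProbabilityMeasure P] (hP : IsAtomless P)
    (pr : PairedSpaces P) :
    ∃ Z ∈ pr.carrier, Nonconstant P Z ∧ (∫ ω, Z ω ∂P) ≠ 0 := by
  classical
  obtain ⟨B, hB, -, h0, h1⟩ := hP univ MeasurableSet.univ (by simp)
  refine ⟨B.indicator fun _ => 1, pr.linf_carrier _ ⟨measurable_const.indicator hB, 1, ?_⟩, ?_, ?_⟩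
  · refine .of_forall fun ω => ?_
    by_cases h : ω ∈ B <;> simp [h]
  · intro c hc
    by_cases hc1 : c = 1
    · refine h1.ne ?_
      rw [measure_univ, prob_compl_eq_zero_iff hB |>.1]
      refine measure_mono_null (fun ω hω => ?_) (ae_iff.1 hc)
      have : ω ∉ B := hω
      simp [this, hc1]
    · refine h0.ne' (measure_mono_null (fun ω hω => ?_) (ae_iff.1 hc))
      simpa [hω] using fun h : (1 : ℝ) = c => hc1 h.symm
  · rw [integral_indicator hB]
    simp only [integral_const, smul_eq_mul, mul_one]
    rw [measureReal_def, Measure.restrict_apply .univ, univ_inter]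
    exact (ENNReal.toReal_pos h0.ne' (measure_ne_top _ _)).ne'

/-- affine collapse to the mean for proper, convex,
`σ(𝒳,𝒳*)`-lower semicontinuous, law-invariant functionals: four equivalent conditions. -/
theorem collapse_affine_convex
    (P : Measure Ω) [IsProbabilityMeasure P] (hP : IsAtomless P)
    (pr : PairedSpaces P) (φ : (Ω → ℝ) → EReal)
    (hbot : ∀ X ∈ pr.carrier, φ X ≠ (⊥ : EReal))
    (hproper : ∃ X ∈ pr.carrier, φ X ≠ (⊤ : EReal))
    (hconv : ConvexFn pr.carrier φ)
    (hlsc : WeakLSC P pr φ)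
    (hlaw : LawInvariantFn P pr.carrier φ) :
    [ (∃ a b : ℝ, ∀ X ∈ pr.carrier, φ X = ((a * (∫ ω, X ω ∂P) + b : ℝ) : EReal)),
      (∃ a : ℝ, ∃ Z ∈ pr.carrier, Nonconstant P Z ∧ (∫ ω, Z ω ∂P) ≠ 0 ∧
        ∀ X ∈ pr.carrier, ∀ t : ℝ,
          φ (fun ω => X ω + t * Z ω) = φ X + ((a * t : ℝ) : EReal)),
      (∃ a : ℝ, ∃ Z ∈ pr.carrier, Nonconstant P Z ∧ (∫ ω, Z ω ∂P) ≠ 0 ∧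
        ∃ x : ℝ, φ (fun _ => x) ≠ (⊤ : EReal) ∧
          ∀ t : ℝ, φ (fun ω => x + t * Z ω) = φ (fun _ => x) + ((a * t : ℝ) : EReal)),
      (∃ c : ℝ, ∀ Y ∈ pr.dual,
        ((∃ r : ℝ, conj P pr.carrier φ Y = (r : EReal)) ↔ Y =ᵐ[P] fun _ => c)) ].TFAE := by
  tfae_have 1 → 2 := by
    rintro ⟨a, b, h⟩
    obtain ⟨Z, hZ, hZn, hZ0⟩ := exists_nonconstant hP pr
    refine ⟨a * ∫ ω, Z ω ∂P, Z, hZ, hZn, hZ0, fun X hX t => ?_⟩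
    rw [h _ (pr.add_carrier X hX _ (pr.smul_carrier Z hZ t)), h X hX, ← EReal.coe_add,
      integral_add (pr.int_carrier X hX) ((pr.int_carrier Z hZ).const_mul t), integral_const_mul]
    congr 1
    ring
  tfae_have 1 → 3 := by
    rintro ⟨a, b, h⟩
    obtain ⟨Z, hZ, hZn, hZ0⟩ := exists_nonconstant hP pr
    refine ⟨a * ∫ ω, Z ω ∂P, Z, hZ, hZn, hZ0, 0, ?_, fun t => ?_⟩
    · rw [h _ (pr.const_carrier 0)]
      exact EReal.coe_ne_top _
    · rw [h _ (pr.add_carrier _ (pr.const_carrier 0) _ (pr.smul_carrier Z hZ t)),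
        h _ (pr.const_carrier 0), ← EReal.coe_add,
        integral_add (integrable_const _) ((pr.int_carrier Z hZ).const_mul t), integral_const_mul]
      congr 1
      ring
  tfae_have 2 → 4 := by
    rintro ⟨a, Z, hZ, hZn, hZ0, h⟩
    obtain ⟨X, hX, hXt⟩ := hproper
    exact dom_conj_of_line hP pr hbot hconv hlsc hlaw hX hZ hZn hZ0 hXt (h X hX)
  tfae_have 3 → 4 := by
    rintro ⟨a, Z, hZ, hZn, hZ0, x, hx, h⟩
    exact dom_conj_of_line hP pr hbot hconv hlsc hlaw (pr.const_carrier x) hZ hZn hZ0 hx h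
  tfae_have 4 → 1 := by
    rintro ⟨c, hc⟩
    exact affine_of_dom_conj pr hbot hproper hconv hlsc hc
  tfae_finish

end Collapse
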